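/- arXiv:1106.4583 — 6 statements merged into one kernel-verified Lean document; each statement's English description precedes it below -/
import Mathlib

section
/- Along any solution of the minimal-surface generating system, the quantity ν/√(τ² + h²) is constant: for all s, t in the interval of definition, ν(s)/√(τ(s)² + h²) = ν(t)/√(τ(t)² + h²). -/
/-!
Up to the time change with speed `1 / (τ² + ν² + h²)`, the system is `τ' = τ² + h²`, `ν' = τ ν`.
Then `√(τ² + h²)` solves the same linear equation `y' = τ y` as `ν`, and two solutions of a scalar
linear equation have constant ratio.
-/

theorem eq_of_hasDerivWithinAt_zero_of_convex {𝕜 G : Type*} [RCLike 𝕜] [NormedAddCommGroup G]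
    [NormedSpace 𝕜 G] {f : 𝕜 → G} {s : Set 𝕜} {x y : 𝕜} (hs : Convex ℝ s)
    (hf : ∀ z ∈ s, HasDerivWithinAt f 0 s z) (hx : x ∈ s) (hy : y ∈ s) : f x = f y := by
  have norm_sub_le : ‖f x - f y‖ ≤ 0 * ‖x - y‖ :=
    hs.norm_image_sub_le_of_norm_hasDerivWithin_le hf (fun _ _ ↦ norm_zero.le) hy hx
  rwa [zero_mul, norm_le_zero_iff, sub_eq_zero] at norm_sub_le

theorem hasDerivWithinAt_div_zero_of_linear {𝕜 𝕜' : Type*} [NontriviallyNormedField 𝕜]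
    [NontriviallyNormedField 𝕜'] [NormedAlgebra 𝕜 𝕜'] {u v : 𝕜 → 𝕜'} {a : 𝕜'} {s : Set 𝕜} {x : 𝕜}
    (hu : HasDerivWithinAt u (a * u x) s x) (hv : HasDerivWithinAt v (a * v x) s x)
    (hvx : v x ≠ 0) : HasDerivWithinAt (fun z ↦ u z / v z) 0 s x :=
  (hu.fun_div hv hvx).congr_deriv (by ring)

theorem div_eq_div_of_hasDerivWithinAt_linear {𝕜 𝕜' : Type*} [RCLike 𝕜]
    [NontriviallyNormedField 𝕜'] [NormedAlgebra 𝕜 𝕜'] {a u v : 𝕜 → 𝕜'} {s : Set 𝕜} {x y : 𝕜}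
    (hs : Convex ℝ s) (hu : ∀ z ∈ s, HasDerivWithinAt u (a z * u z) s z)
    (hv : ∀ z ∈ s, HasDerivWithinAt v (a z * v z) s z) (hv₀ : ∀ z ∈ s, v z ≠ 0)
    (hx : x ∈ s) (hy : y ∈ s) : u x / v x = u y / v y :=
  eq_of_hasDerivWithinAt_zero_of_convex (f := fun z ↦ u z / v z) hs
    (fun z hz ↦ hasDerivWithinAt_div_zero_of_linear (hu z hz) (hv z hz) (hv₀ z hz)) hx hy

theorem hasDerivWithinAt_sqrt_sq_add_const_of_riccati {τ : ℝ → ℝ} {a c s : ℝ} {I : Set ℝ}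
    (hτ : HasDerivWithinAt τ (a * (τ s ^ 2 + c)) I s) (hpos : 0 < τ s ^ 2 + c) :
    HasDerivWithinAt (fun x ↦ √(τ x ^ 2 + c)) (a * τ s * √(τ s ^ 2 + c)) I s := by
  refine (((hτ.fun_pow 2).add_const c).sqrt hpos.ne').congr_deriv ?_
  have sqrt_ne_zero : √(τ s ^ 2 + c) ≠ 0 := (Real.sqrt_pos.mpr hpos).ne'
  have sq_sqrt : √(τ s ^ 2 + c) ^ 2 = τ s ^ 2 + c := Real.sq_sqrt hpos.le
  field_simp
  rw [sq_sqrt]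
  push_cast
  ring

theorem minimal_first_integral_general {I : Set ℝ} (hI : I.OrdConnected) {a τ ν : ℝ → ℝ} {c : ℝ}
    (hpos : ∀ s ∈ I, 0 < τ s ^ 2 + c)
    (hτ : ∀ s ∈ I, HasDerivWithinAt τ (a s * (τ s ^ 2 + c)) I s)
    (hν : ∀ s ∈ I, HasDerivWithinAt ν (a s * τ s * ν s) I s) :
    ∀ s ∈ I, ∀ t ∈ I, ν s / √(τ s ^ 2 + c) = ν t / √(τ t ^ 2 + c) := fun _ hs _ ht ↦
  div_eq_div_of_hasDerivWithinAt_linear (v := fun s ↦ √(τ s ^ 2 + c)) hI.convex hν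
    (fun s hs ↦ hasDerivWithinAt_sqrt_sq_add_const_of_riccati (hτ s hs) (hpos s hs))
    (fun s hs ↦ (Real.sqrt_pos.mpr (hpos s hs)).ne') hs ht

/-- Section 5. Along any solution of the generating system of the
helicoidal minimal surfaces of pitch `h > 0`, namely
`τ' = (τ² + h²)/(τ² + ν² + h²)`, `ν' = τν/(τ² + ν² + h²)` on an interval `I`,
the quantity `ν/√(τ² + h²)` is constant. -/
theorem minimal_first_integral
    (h : ℝ) (hh : 0 < h) (I : Set ℝ) (hI : I.OrdConnected) (τ ν : ℝ → ℝ)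
    (hτ : ∀ s ∈ I, HasDerivWithinAt τ
      ((τ s ^ 2 + h ^ 2) / (τ s ^ 2 + ν s ^ 2 + h ^ 2)) I s)
    (hν : ∀ s ∈ I, HasDerivWithinAt ν
      (τ s * ν s / (τ s ^ 2 + ν s ^ 2 + h ^ 2)) I s) :
    ∀ s ∈ I, ∀ t ∈ I,
      ν s / Real.sqrt (τ s ^ 2 + h ^ 2) = ν t / Real.sqrt (τ t ^ 2 + h ^ 2) :=
  minimal_first_integral_general hI (a := fun s ↦ (τ s ^ 2 + ν s ^ 2 + h ^ 2)⁻¹)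
    (fun s _ ↦ by positivity) (fun s hs ↦ (hτ s hs).congr_deriv (by ring))
    (fun s hs ↦ (hν s hs).congr_deriv (by ring))
end

section
/- For every h > 0 and A ∈ ℝ, the functions τ(s) = h²s/(A² + h²) and ν(s) = (A/h)·√(τ(s)² + h²) defined on all of ℝ satisfy the system τ'(s) = (τ(s)² + h²)/(τ(s)² + ν(s)² + h²) and ν'(s) = τ(s)ν(s)/(τ(s)² + ν(s)² + h²) for all s ∈ ℝ. -/
/-!
Put `c = A / h`. Along the hyperbola `ν = c √(τ² + h²)` the denominator `τ² + ν² + h²` equals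
`(1 + c²)(τ² + h²)`, so the first equation reduces to `τ' = 1 / (1 + c²)`, which is the constant
slope `h² / (A² + h²)`. The second equation is then the chain rule applied to `c √(τ² + h²)`.
-/

/-- The pair `(τ, ν)` satisfies at `s` the differential equations of the generating curves of
helicoidal minimal surfaces of pitch `h`. -/
structure IsGeneratingSolutionAt (h : ℝ) (τ ν : ℝ → ℝ) (s : ℝ) : Prop where
  hasDerivAt_tau : HasDerivAt τ ((τ s ^ 2 + h ^ 2) / (τ s ^ 2 + ν s ^ 2 + h ^ 2)) s
  hasDerivAt_nu : HasDerivAt ν (τ s * ν s / (τ s ^ 2 + ν s ^ 2 + h ^ 2)) s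

section Hyperbola

variable (c h : ℝ)

lemma hyperbola_denom_eq (t : ℝ) :
    t ^ 2 + (c * √(t ^ 2 + h ^ 2)) ^ 2 + h ^ 2 = (1 + c ^ 2) * (t ^ 2 + h ^ 2) := by
  rw [mul_pow, Real.sq_sqrt (by positivity)]
  ring

lemma hyperbola_tau_rhs_eq {t : ℝ} (hq : t ^ 2 + h ^ 2 ≠ 0) :
    (t ^ 2 + h ^ 2) / (t ^ 2 + (c * √(t ^ 2 + h ^ 2)) ^ 2 + h ^ 2) = (1 + c ^ 2)⁻¹ := by
  rw [hyperbola_denom_eq, div_mul_cancel_right₀ hq]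

lemma hyperbola_nu_rhs_eq (t : ℝ) :
    t * (c * √(t ^ 2 + h ^ 2)) / (t ^ 2 + (c * √(t ^ 2 + h ^ 2)) ^ 2 + h ^ 2) =
      c * (t * (1 + c ^ 2)⁻¹ / √(t ^ 2 + h ^ 2)) :=
  calc t * (c * √(t ^ 2 + h ^ 2)) / (t ^ 2 + (c * √(t ^ 2 + h ^ 2)) ^ 2 + h ^ 2)
      = t * (c * √(t ^ 2 + h ^ 2)) / ((1 + c ^ 2) * (t ^ 2 + h ^ 2)) := by
        rw [hyperbola_denom_eq]
    _ = c * (t * (1 + c ^ 2)⁻¹ * (√(t ^ 2 + h ^ 2) / (t ^ 2 + h ^ 2))) := by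
        rw [div_eq_mul_inv, mul_inv]
        ring
    _ = c * (t * (1 + c ^ 2)⁻¹ / √(t ^ 2 + h ^ 2)) := by
        rw [Real.sqrt_div_self, ← div_eq_mul_inv]

variable {h} {τ : ℝ → ℝ} {s : ℝ}

lemma hasDerivAt_const_mul_sqrt_sq_add_sq {τ' : ℝ} (hτ : HasDerivAt τ τ' s)
    (hq : τ s ^ 2 + h ^ 2 ≠ 0) :
    HasDerivAt (fun x ↦ c * √(τ x ^ 2 + h ^ 2)) (c * (τ s * τ' / √(τ s ^ 2 + h ^ 2))) s := by
  refine ((((hτ.fun_pow 2).add_const (h ^ 2)).sqrt hq).const_mul c).congr_deriv ?_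
  ring

variable {c}

lemma isGeneratingSolutionAt_of_hyperbola {ν : ℝ → ℝ} (hν : ∀ x, ν x = c * √(τ x ^ 2 + h ^ 2))
    (hτ : HasDerivAt τ (1 + c ^ 2)⁻¹ s) (hq : τ s ^ 2 + h ^ 2 ≠ 0) :
    IsGeneratingSolutionAt h τ ν s := by
  obtain rfl : ν = fun x ↦ c * √(τ x ^ 2 + h ^ 2) := funext hν
  constructor
  · rwa [hyperbola_tau_rhs_eq c h hq]
  · rw [hyperbola_nu_rhs_eq]
    exact hasDerivAt_const_mul_sqrt_sq_add_sq c hτ hq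

end Hyperbola

lemma sq_div_sq_add_sq_eq_inv_one_add_div_sq {K : Type*} [Field K] (a : K) {b : K} (hb : b ≠ 0) :
    b ^ 2 / (a ^ 2 + b ^ 2) = (1 + (a / b) ^ 2)⁻¹ := by
  rw [div_pow, one_add_div (pow_ne_zero 2 hb), inv_div, add_comm]

/-- Section 5, Wunderlich's solutions. For every `h > 0` and `A ∈ ℝ`,
the functions `τ(s) = h²s/(A² + h²)` and `ν(s) = (A/h)·√(τ(s)² + h²)` solve the generating
system of the helicoidal minimal surfaces of pitch `h` on all of `ℝ`:
`τ' = (τ² + h²)/(τ² + ν² + h²)` and `ν' = τν/(τ² + ν² + h²)`. -/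
theorem wunderlich_solutions
    (h : ℝ) (hh : 0 < h) (A : ℝ)
    (τ ν : ℝ → ℝ)
    (hτdef : ∀ s : ℝ, τ s = h ^ 2 * s / (A ^ 2 + h ^ 2))
    (hνdef : ∀ s : ℝ, ν s = A / h * Real.sqrt (τ s ^ 2 + h ^ 2)) :
    (∀ s : ℝ, HasDerivAt τ ((τ s ^ 2 + h ^ 2) / (τ s ^ 2 + ν s ^ 2 + h ^ 2)) s) ∧
    (∀ s : ℝ, HasDerivAt ν (τ s * ν s / (τ s ^ 2 + ν s ^ 2 + h ^ 2)) s) := by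
  have hasDerivAt_τ (s : ℝ) : HasDerivAt τ (1 + (A / h) ^ 2)⁻¹ s := by
    rw [funext hτdef, ← sq_div_sq_add_sq_eq_inv_one_add_div_sq A hh.ne']
    simpa using ((hasDerivAt_id s).const_mul (h ^ 2)).div_const (A ^ 2 + h ^ 2)
  have isSolution (s : ℝ) : IsGeneratingSolutionAt h τ ν s :=
    isGeneratingSolutionAt_of_hyperbola hνdef (hasDerivAt_τ s) (by positivity)
  exact ⟨fun s ↦ (isSolution s).hasDerivAt_tau, fun s ↦ (isSolution s).hasDerivAt_nu⟩
end

section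
/- Let h > 0 and suppose (τ, ν) : I → ℝ² is a continuously differentiable solution of the system τ' = ((τ² + h²)/(h(τ² + ν² + h²)))·(h + ν√(τ² + h²)), ν' = (hτν − τ(τ² + h²)^{3/2})/(h(τ² + ν² + h²)). Define x(s) = τ(s)·√(τ(s)² + ν(s)² + h²)/√(τ(s)² + h²) and y(s) = h·ν(s)/√(τ(s)² + h²). Then x and y satisfy x'(s) = (h/√(y(s)² + h²))·(y(s) + 1) and y'(s) = −h·x(s)/√(y(s)² + h²) for all s ∈ I. -/
/-!
Write `A = √(τ² + h²)` and `B = √(τ² + ν² + h²)`, so that `B² = A² + ν²`, `x = (τ / A) * B` and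
`y = h * ν / A`. The system gives `τ * τ' + ν * ν' = τ`, hence `B' = τ / B`, and the quotient rule
turns the derivatives of `x` and `y` into `(A + h * ν) / B` and `-τ`. These are the claimed
right-hand sides because `√(y² + h²) = h * B / A`.
-/

section SqrtQuotients

variable {f g : ℝ → ℝ} {f' g' c s : ℝ} {I : Set ℝ}

lemma hasDerivWithinAt_sqrt_sq_add_sq_add_const (hf : HasDerivWithinAt f f' I s)
    (hg : HasDerivWithinAt g g' I s) (hne : f s ^ 2 + g s ^ 2 + c ≠ 0) :
    HasDerivWithinAt (fun t => √(f t ^ 2 + g t ^ 2 + c))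
      ((f s * f' + g s * g') / √(f s ^ 2 + g s ^ 2 + c)) I s := by
  refine ((((hf.fun_pow 2).fun_add (hg.fun_pow 2)).add_const c).sqrt hne).congr_deriv ?_
  push_cast
  ring

lemma hasDerivWithinAt_div_sqrt_sq_add_const (hf : HasDerivWithinAt f f' I s)
    (hg : HasDerivWithinAt g g' I s) (hpos : 0 < f s ^ 2 + c) :
    HasDerivWithinAt (fun t => g t / √(f t ^ 2 + c))
      ((g' * (f s ^ 2 + c) - g s * (f s * f')) / √(f s ^ 2 + c) ^ 3) I s := by
  have hsqrt : 0 < √(f s ^ 2 + c) := Real.sqrt_pos.2 hpos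
  have hsq : √(f s ^ 2 + c) ^ 2 = f s ^ 2 + c := Real.sq_sqrt hpos.le
  have hderiv := hg.fun_div (((hf.fun_pow 2).add_const c).sqrt hpos.ne') hsqrt.ne'
  refine hderiv.congr_deriv ?_
  field_simp
  rw [hsq]
  push_cast
  ring

end SqrtQuotients

/-- The right-hand side of the equation for `τ = ⟨X, T⟩` in the system of the generating curve `X`
of a helicoidal surface of pitch `h` and mean curvature `-1`. -/
noncomputable def tangentialVelocity (h τ ν : ℝ) : ℝ :=
  (τ ^ 2 + h ^ 2) / (h * (τ ^ 2 + ν ^ 2 + h ^ 2)) * (h + ν * √(τ ^ 2 + h ^ 2))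

/-- The right-hand side of the equation for `ν = ⟨X, N⟩` in the same system as
`tangentialVelocity`. -/
noncomputable def normalVelocity (h τ ν : ℝ) : ℝ :=
  (h * τ * ν - τ * √(τ ^ 2 + h ^ 2) ^ 3) / (h * (τ ^ 2 + ν ^ 2 + h ^ 2))

/-- The first component `x` of the linearizing involution `Φ_h(ν, τ) = (x, y)`, with `τ` as first
argument. -/
noncomputable def linearizingX (h τ ν : ℝ) : ℝ :=
  τ * √(τ ^ 2 + ν ^ 2 + h ^ 2) / √(τ ^ 2 + h ^ 2)

/-- The second component `y` of the linearizing involution `Φ_h(ν, τ) = (x, y)`, with `τ` as first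
argument. -/
noncomputable def linearizingY (h τ ν : ℝ) : ℝ :=
  h * ν / √(τ ^ 2 + h ^ 2)

section Algebra

variable {h : ℝ} (τ ν : ℝ)

-- This is `(‖X‖² / 2)' = ⟨X, T⟩`, since `‖X‖² = τ² + ν²`.
lemma mul_tangentialVelocity_add_mul_normalVelocity (hh : h ≠ 0) :
    τ * tangentialVelocity h τ ν + ν * normalVelocity h τ ν = τ := by
  have hsq : √(τ ^ 2 + h ^ 2) ^ 2 = τ ^ 2 + h ^ 2 := Real.sq_sqrt (by positivity)
  have hB : τ ^ 2 + ν ^ 2 + h ^ 2 ≠ 0 := by positivity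
  unfold tangentialVelocity normalVelocity
  field_simp
  linear_combination -τ * ν * √(τ ^ 2 + h ^ 2) * hsq

lemma tangentialVelocity_mul_sub_mul_tangentialVelocity (hh : h ≠ 0) :
    tangentialVelocity h τ ν * (τ ^ 2 + h ^ 2) - τ * (τ * tangentialVelocity h τ ν) =
      h * √(τ ^ 2 + h ^ 2) ^ 2 * (h + ν * √(τ ^ 2 + h ^ 2)) / √(τ ^ 2 + ν ^ 2 + h ^ 2) ^ 2 := by
  rw [Real.sq_sqrt (by positivity), Real.sq_sqrt (by positivity), tangentialVelocity]
  field_simp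
  ring

lemma normalVelocity_mul_sub_mul_tangentialVelocity (hh : h ≠ 0) :
    normalVelocity h τ ν * (τ ^ 2 + h ^ 2) - ν * (τ * tangentialVelocity h τ ν) =
      -τ * √(τ ^ 2 + h ^ 2) ^ 3 / h := by
  have hsq : √(τ ^ 2 + h ^ 2) ^ 2 = τ ^ 2 + h ^ 2 := Real.sq_sqrt (by positivity)
  have hB : τ ^ 2 + ν ^ 2 + h ^ 2 ≠ 0 := by positivity
  unfold tangentialVelocity normalVelocity
  field_simp
  linear_combination τ * ν ^ 2 * √(τ ^ 2 + h ^ 2) * hsq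

lemma sqrt_linearizingY_sq_add_sq (hh : 0 < h) :
    √(linearizingY h τ ν ^ 2 + h ^ 2) =
      h * √(τ ^ 2 + ν ^ 2 + h ^ 2) / √(τ ^ 2 + h ^ 2) := by
  have hA : τ ^ 2 + h ^ 2 ≠ 0 := by positivity
  have hsq : linearizingY h τ ν ^ 2 + h ^ 2 =
      h ^ 2 * (τ ^ 2 + ν ^ 2 + h ^ 2) / (τ ^ 2 + h ^ 2) := by
    rw [linearizingY, div_pow, Real.sq_sqrt (by positivity)]
    field_simp
    ring
  rw [hsq, Real.sqrt_div (by positivity), Real.sqrt_mul (by positivity), Real.sqrt_sq hh.le]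

lemma div_sqrt_linearizingY_mul_linearizingY_add_one (hh : 0 < h) :
    h / √(linearizingY h τ ν ^ 2 + h ^ 2) * (linearizingY h τ ν + 1) =
      (√(τ ^ 2 + h ^ 2) + h * ν) / √(τ ^ 2 + ν ^ 2 + h ^ 2) := by
  rw [sqrt_linearizingY_sq_add_sq τ ν hh, linearizingY]
  field_simp
  ring

lemma neg_mul_linearizingX_div_sqrt_linearizingY (hh : 0 < h) :
    -(h * linearizingX h τ ν) / √(linearizingY h τ ν ^ 2 + h ^ 2) = -τ := by
  rw [sqrt_linearizingY_sq_add_sq τ ν hh, linearizingX]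
  field_simp

end Algebra

section Flow

variable {h s : ℝ} {τ ν : ℝ → ℝ} {I : Set ℝ}

lemma hasDerivWithinAt_linearizingX (hh : h ≠ 0)
    (hτ : HasDerivWithinAt τ (tangentialVelocity h (τ s) (ν s)) I s)
    (hν : HasDerivWithinAt ν (normalVelocity h (τ s) (ν s)) I s) :
    HasDerivWithinAt (fun t => linearizingX h (τ t) (ν t))
      ((√(τ s ^ 2 + h ^ 2) + h * ν s) / √(τ s ^ 2 + ν s ^ 2 + h ^ 2)) I s := by
  have hB := hasDerivWithinAt_sqrt_sq_add_sq_add_const (c := h ^ 2) hτ hν (by positivity)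
  rw [mul_tangentialVelocity_add_mul_normalVelocity _ _ hh] at hB
  have hτA := hasDerivWithinAt_div_sqrt_sq_add_const (c := h ^ 2) hτ hτ (by positivity)
  rw [tangentialVelocity_mul_sub_mul_tangentialVelocity _ _ hh] at hτA
  have hx : (fun t => linearizingX h (τ t) (ν t)) =
      fun t => τ t / √(τ t ^ 2 + h ^ 2) * √(τ t ^ 2 + ν t ^ 2 + h ^ 2) :=
    funext fun t => mul_div_right_comm ..
  rw [hx]
  refine (hτA.fun_mul hB).congr_deriv ?_
  have hsq : √(τ s ^ 2 + h ^ 2) ^ 2 = τ s ^ 2 + h ^ 2 := Real.sq_sqrt (by positivity)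
  field_simp
  linear_combination -hsq

lemma hasDerivWithinAt_linearizingY (hh : h ≠ 0)
    (hτ : HasDerivWithinAt τ (tangentialVelocity h (τ s) (ν s)) I s)
    (hν : HasDerivWithinAt ν (normalVelocity h (τ s) (ν s)) I s) :
    HasDerivWithinAt (fun t => linearizingY h (τ t) (ν t)) (-τ s) I s := by
  have hνA := hasDerivWithinAt_div_sqrt_sq_add_const (c := h ^ 2) hτ hν (by positivity)
  rw [normalVelocity_mul_sub_mul_tangentialVelocity _ _ hh] at hνA
  have hy : (fun t => linearizingY h (τ t) (ν t)) = fun t => h * (ν t / √(τ t ^ 2 + h ^ 2)) :=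
    funext fun t => mul_div_assoc ..
  rw [hy]
  refine (hνA.const_mul h).congr_deriv ?_
  field_simp

end Flow

/-- Section 6, linearizing change of variables. Let `h > 0` and let
`(τ, ν)` solve the generating system of helicoidal surfaces of pitch `h` and constant mean
curvature `H = −1` on an interval `I`. Then the functions
`x = τ·√(τ² + ν² + h²)/√(τ² + h²)` and `y = hν/√(τ² + h²)` satisfy
`x' = (h/√(y² + h²))(y + 1)` and `y' = −hx/√(y² + h²)`. -/
theorem cmc_change_of_variables
    (h : ℝ) (hh : 0 < h) (I : Set ℝ) (τ ν : ℝ → ℝ)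
    (hτ : ∀ s ∈ I, HasDerivWithinAt τ
      ((τ s ^ 2 + h ^ 2) / (h * (τ s ^ 2 + ν s ^ 2 + h ^ 2)) *
        (h + ν s * Real.sqrt (τ s ^ 2 + h ^ 2))) I s)
    (hν : ∀ s ∈ I, HasDerivWithinAt ν
      ((h * τ s * ν s - τ s * Real.sqrt (τ s ^ 2 + h ^ 2) ^ 3) /
        (h * (τ s ^ 2 + ν s ^ 2 + h ^ 2))) I s)
    (x y : ℝ → ℝ)
    (hx : ∀ s : ℝ, x s = τ s * Real.sqrt (τ s ^ 2 + ν s ^ 2 + h ^ 2) /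
      Real.sqrt (τ s ^ 2 + h ^ 2))
    (hy : ∀ s : ℝ, y s = h * ν s / Real.sqrt (τ s ^ 2 + h ^ 2)) :
    ∀ s ∈ I,
      HasDerivWithinAt x (h / Real.sqrt (y s ^ 2 + h ^ 2) * (y s + 1)) I s ∧
      HasDerivWithinAt y (-(h * x s) / Real.sqrt (y s ^ 2 + h ^ 2)) I s := by
  obtain rfl : x = fun s => linearizingX h (τ s) (ν s) := funext hx
  obtain rfl : y = fun s => linearizingY h (τ s) (ν s) := funext hy
  intro s hs
  rw [div_sqrt_linearizingY_mul_linearizingY_add_one _ _ hh,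
    neg_mul_linearizingX_div_sqrt_linearizingY _ _ hh]
  exact ⟨hasDerivWithinAt_linearizingX hh.ne' (hτ s hs) (hν s hs),
    hasDerivWithinAt_linearizingY hh.ne' (hτ s hs) (hν s hs)⟩
end

section
/- For every h > 0, Δφ(h, 1) = (2√(h² + 4)/h)·∫₀^{π/2} √(1 − (4/(h² + 4))·sin²θ) dθ; that is, Δφ(h, 1) equals (2√(h² + 4)/h)·E(2/√(h² + 4)), where E is the complete elliptic integral of the second kind. -/
open Filter Topology intervalIntegral

/-- The change `Δφ(h, R)` of the polar angle of the generating curve of a constant mean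
curvature (`H = −1`) helicoidal surface of pitch `h` over one full excursion between the
boundaries of the annulus `|R − 1| ≤ |X| ≤ R + 1`. -/
noncomputable def deltaPhi (h R : ℝ) : ℝ :=
  ∫ u in (-Real.pi)..Real.pi,
    Real.sqrt (R ^ 2 + 1 + 2 * R * Real.sin u + h ^ 2) * (1 + R * Real.sin u) /
      (h * (R ^ 2 + 1 + 2 * R * Real.sin u))

/-!
At `R = 1` the factor `1 + sin u` cancels away from the null set `sin u = -1`, leaving the integrand
`√(h² + 2 + 2 sin u) / (2h)`. Translating by `π / 2`, folding the resulting even integrand and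
substituting `u = 2θ` replaces `sin u` on `[-π, π]` by `cos 2θ = 1 - 2 sin² θ` on `[0, π / 2]`, and
the integrand becomes that of `E` after `√(h² + 4)` is factored out.
-/

open Real

/-- The complete elliptic integral of the second kind `E(k)`, as a function of the modulus `k`
(not of the parameter `m = k²`). -/
noncomputable def completeEllipticE (k : ℝ) : ℝ :=
  ∫ θ in (0 : ℝ)..(π / 2), √(1 - k ^ 2 * sin θ ^ 2)

section IntegralSymmetry

variable {E : Type*} [NormedAddCommGroup E] [NormedSpace ℝ E]

theorem integral_neg_self_of_even {f : ℝ → E} (hf : Function.Even f) (a : ℝ) :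
    ∫ x in (-a)..a, f x = (2 : ℝ) • ∫ x in (0 : ℝ)..a, f x := by
  by_cases hint : IntervalIntegrable f MeasureTheory.volume 0 a
  · have hint_neg : IntervalIntegrable f MeasureTheory.volume (-a) 0 := by
      simpa only [hf _, neg_zero] using ((IntervalIntegrable.iff_comp_neg).mp hint).symm
    have hreflect : ∫ x in (-a)..0, f x = ∫ x in (0 : ℝ)..a, f x := by
      simpa only [hf _, neg_zero, neg_neg] using integral_comp_neg (a := -a) (b := 0) f
    rw [← integral_add_adjacent_intervals hint_neg hint, hreflect, two_smul]
  · have hint_full : ¬ IntervalIntegrable f MeasureTheory.volume (-a) a := fun hfull =>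
      hint (hfull.mono_set (Set.uIcc_subset_uIcc_right
        (by rcases le_total 0 a with ha | ha <;> simp [ha])))
    rw [integral_undef hint, integral_undef hint_full, smul_zero]

theorem integral_comp_sin_eq_integral_comp_cos (f : ℝ → E) :
    ∫ u in (-π)..π, f (sin u) = ∫ u in (-π)..π, f (cos u) := by
  have hper : Function.Periodic (fun u => f (cos u)) (2 * π) := cos_periodic.comp f
  calc ∫ u in (-π)..π, f (sin u)
      = ∫ u in (-π)..π, f (cos (u - π / 2)) := by simp only [cos_sub_pi_div_two]
    _ = ∫ u in (-π - π / 2)..(π - π / 2), f (cos u) :=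
        integral_comp_sub_right (fun u => f (cos u)) (π / 2)
    _ = ∫ u in (-π)..π, f (cos u) := by
        convert hper.intervalIntegral_add_eq (-π - π / 2) (-π) using 2 <;> ring

theorem integral_comp_sin_eq_four_smul_integral (f : ℝ → E) :
    ∫ u in (-π)..π, f (sin u) =
      (4 : ℝ) • ∫ θ in (0 : ℝ)..(π / 2), f (1 - 2 * sin θ ^ 2) := by
  have heven : Function.Even fun u => f (cos u) := fun u => by simp only [cos_neg]
  calc ∫ u in (-π)..π, f (sin u)
      = (2 : ℝ) • ∫ u in (0 : ℝ)..π, f (cos u) := by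
        rw [integral_comp_sin_eq_integral_comp_cos, integral_neg_self_of_even heven]
    _ = (2 : ℝ) • (2 : ℝ) • ∫ θ in (0 : ℝ)..(π / 2), f (cos (2 * θ)) := by
        rw [smul_integral_comp_mul_left (fun u => f (cos u)), mul_zero,
          mul_div_cancel₀ π two_ne_zero]
    _ = (4 : ℝ) • ∫ θ in (0 : ℝ)..(π / 2), f (1 - 2 * sin θ ^ 2) := by
        simp only [cos_two_mul_eq_one_sub, smul_smul]
        norm_num

end IntegralSymmetry

theorem integral_sqrt_add_mul_sin {a b : ℝ} (hab : 0 < a + b) (hb : 0 ≤ b) :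
    ∫ u in (-π)..π, √(a + b * sin u) =
      4 * √(a + b) * completeEllipticE √(2 * b / (a + b)) := by
  have hsqrt (θ : ℝ) : √(a + b * (1 - 2 * sin θ ^ 2)) =
      √(a + b) * √(1 - √(2 * b / (a + b)) ^ 2 * sin θ ^ 2) := by
    rw [← sqrt_mul hab.le, sq_sqrt (by positivity)]
    congr 1
    field_simp
    ring
  rw [integral_comp_sin_eq_four_smul_integral fun x => √(a + b * x)]
  simp only [hsqrt, integral_const_mul, completeEllipticE, smul_eq_mul, mul_assoc]

theorem ae_sin_ne (c : ℝ) : ∀ᵐ u : ℝ, sin u ≠ c := by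
  by_cases hc : ∃ x, sin x = c
  · obtain ⟨x, rfl⟩ := hc
    have hcountable : {u | sin u = sin x}.Countable := by
      refine ((Set.countable_range fun k : ℤ => 2 * k * π + x).union
        (Set.countable_range fun k : ℤ => (2 * k + 1) * π - x)).mono fun u hu => ?_
      obtain ⟨k, rfl | rfl⟩ := sin_eq_sin_iff.mp hu.symm
      · exact .inl ⟨k, rfl⟩
      · exact .inr ⟨k, rfl⟩
    exact hcountable.ae_notMem MeasureTheory.volume
  · exact .of_forall fun u hu => hc ⟨u, hu⟩

theorem deltaPhi_one_eq_integral_sqrt (h : ℝ) :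
    deltaPhi h 1 = (2 * h)⁻¹ * ∫ u in (-π)..π, √(h ^ 2 + 2 + 2 * sin u) := by
  rw [deltaPhi, ← integral_const_mul]
  refine integral_congr_ae ?_
  filter_upwards [ae_sin_ne (-1)] with u hu _
  have hsin : 1 + sin u ≠ 0 := fun h0 => hu (by linarith)
  have hradicand : 1 ^ 2 + 1 + 2 * 1 * sin u + h ^ 2 = h ^ 2 + 2 + 2 * sin u := by ring
  have hdenom : h * (1 ^ 2 + 1 + 2 * 1 * sin u) = 2 * h * (1 + sin u) := by ring
  rw [hradicand, hdenom, one_mul, mul_div_mul_right _ _ hsin, div_eq_inv_mul]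

/-- Lemma 6.3. For every `h > 0`,
`Δφ(h, 1) = (2√(h² + 4)/h)·E(2/√(h² + 4))`, where `E` is the complete elliptic integral
of the second kind, `E(k) = ∫₀^{π/2} √(1 − k² sin²θ) dθ`. -/
theorem deltaPhi_at_one (h : ℝ) (hh : 0 < h) :
    deltaPhi h 1 = 2 * Real.sqrt (h ^ 2 + 4) / h *
      ∫ θ in (0:ℝ)..(Real.pi / 2),
        Real.sqrt (1 - (2 / Real.sqrt (h ^ 2 + 4)) ^ 2 * Real.sin θ ^ 2) := by
  have hsum : h ^ 2 + 2 + 2 = h ^ 2 + 4 := by ring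
  have hmodulus : √(2 * 2 / (h ^ 2 + 4)) = 2 / √(h ^ 2 + 4) := by
    rw [sqrt_div (by norm_num), sqrt_mul_self zero_le_two]
  calc deltaPhi h 1
      = (2 * h)⁻¹ * (4 * √(h ^ 2 + 4) * completeEllipticE (2 / √(h ^ 2 + 4))) := by
        rw [deltaPhi_one_eq_integral_sqrt,
          integral_sqrt_add_mul_sin (by positivity) zero_le_two, hsum, hmodulus]
    _ = 2 * √(h ^ 2 + 4) / h * completeEllipticE (2 / √(h ^ 2 + 4)) := by ring
end

section
/- For every fixed h > 0, Δφ(h, R) tends to 0 as R → ∞. -/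
open Filter Topology intervalIntegral

/-!
Substituting `R = 1 / x` and factoring out `1 / h` turns the integrand into a function of `(x, u)`
that is jointly continuous for `|x| < 1`, because `1 + x² + 2 x sin u ≥ (1 - |x|)²`. Its integral
over a period is therefore continuous at `x = 0`, where the integrand is `sin u`, with integral `0`.
-/

lemma continuousOn_intervalIntegral_of_continuousOn_prod_univ {X E : Type*} [TopologicalSpace X]
    [NormedAddCommGroup E] [NormedSpace ℝ E] {μ : MeasureTheory.Measure ℝ}
    [MeasureTheory.IsLocallyFiniteMeasure μ] [MeasureTheory.NullSingletonClass μ]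
    {f : X → ℝ → E} {s : Set X} (hf : ContinuousOn f.uncurry (s ×ˢ Set.univ)) (a b : ℝ) :
    ContinuousOn (fun x ↦ ∫ u in a..b, f x u ∂μ) s := by
  rw [continuousOn_iff_continuous_domRestrict]
  refine continuous_parametric_intervalIntegral_of_continuous' ?_ a b
  exact hf.comp_continuous (f := fun p : s × ℝ ↦ ((p.1 : X), p.2)) (by fun_prop)
    fun p ↦ ⟨p.1.2, Set.mem_univ _⟩

/-- The integrand of `h * Δφ(h, R)` in terms of the inverse radius `x = R⁻¹`, which makes sense at
`x = 0`, that is, at `R = ∞`. -/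
noncomputable def rescaledIntegrand (h x u : ℝ) : ℝ :=
  Real.sqrt (1 + x ^ 2 + 2 * x * Real.sin u + h ^ 2 * x ^ 2) * (x + Real.sin u) /
    (1 + x ^ 2 + 2 * x * Real.sin u)

lemma one_add_sq_add_two_mul_pos {x s : ℝ} (hx : |x| < 1) (hs : |s| ≤ 1) :
    0 < 1 + x ^ 2 + 2 * x * s := by
  have abs_mul_le : |x * s| ≤ |x| := by
    simpa only [abs_mul] using mul_le_of_le_one_right (abs_nonneg x) hs
  calc 0 < (1 - |x|) ^ 2 := pow_pos (sub_pos.mpr hx) 2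
    _ = 1 + x ^ 2 - 2 * |x| := by rw [sub_sq, sq_abs]; ring
    _ ≤ 1 + x ^ 2 + 2 * x * s := by linarith [neg_le_of_abs_le abs_mul_le]

lemma continuousOn_rescaledIntegrand (h : ℝ) :
    ContinuousOn (rescaledIntegrand h).uncurry ({x | |x| < 1} ×ˢ Set.univ) := by
  refine ContinuousOn.div (by fun_prop) (by fun_prop) fun p hp ↦ ?_
  exact (one_add_sq_add_two_mul_pos hp.1 (Real.abs_sin_le_one p.2)).ne'

lemma continuousAt_integral_rescaledIntegrand (h a b : ℝ) {x : ℝ} (hx : |x| < 1) :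
    ContinuousAt (fun y ↦ ∫ u in a..b, rescaledIntegrand h y u) x :=
  (continuousOn_intervalIntegral_of_continuousOn_prod_univ
    (continuousOn_rescaledIntegrand h) a b).continuousAt
    ((isOpen_lt continuous_abs continuous_const).mem_nhds hx)

lemma rescaledIntegrand_zero (h u : ℝ) : rescaledIntegrand h 0 u = Real.sin u := by
  simp [rescaledIntegrand]

lemma tendsto_integral_rescaledIntegrand_inv (h : ℝ) :
    Tendsto (fun R : ℝ ↦ ∫ u in (-Real.pi)..Real.pi, rescaledIntegrand h R⁻¹ u) atTop (𝓝 0) := by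
  have integral_zero : ∫ u in (-Real.pi)..Real.pi, rescaledIntegrand h 0 u = 0 := by
    simp [rescaledIntegrand_zero]
  rw [← integral_zero]
  exact (continuousAt_integral_rescaledIntegrand h _ _ (by simp)).tendsto.comp
    tendsto_inv_atTop_zero

lemma rescaledIntegrand_inv (h u : ℝ) {R : ℝ} (hR : 0 < R) :
    rescaledIntegrand h R⁻¹ u =
      Real.sqrt (R ^ 2 + 1 + 2 * R * Real.sin u + h ^ 2) * (1 + R * Real.sin u) /
        (R ^ 2 + 1 + 2 * R * Real.sin u) := by
  have radicand_eq : 1 + R⁻¹ ^ 2 + 2 * R⁻¹ * Real.sin u + h ^ 2 * R⁻¹ ^ 2 =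
      (R ^ 2 + 1 + 2 * R * Real.sin u + h ^ 2) / R ^ 2 := by field_simp
  have denominator_eq : 1 + R⁻¹ ^ 2 + 2 * R⁻¹ * Real.sin u =
      (R ^ 2 + 1 + 2 * R * Real.sin u) / R ^ 2 := by field_simp
  have factor_eq : R⁻¹ + Real.sin u = (1 + R * Real.sin u) / R := by field_simp
  rw [rescaledIntegrand, radicand_eq, denominator_eq, factor_eq, Real.sqrt_div' _ (sq_nonneg R),
    Real.sqrt_sq hR.le, div_mul_div_comm, ← sq, div_div_div_cancel_right₀ (pow_ne_zero 2 hR.ne')]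

lemma deltaPhi_eq_integral_rescaledIntegrand_div (h : ℝ) {R : ℝ} (hR : 0 < R) :
    deltaPhi h R = (∫ u in (-Real.pi)..Real.pi, rescaledIntegrand h R⁻¹ u) / h := by
  simp only [deltaPhi, rescaledIntegrand_inv h _ hR, ← integral_div, div_div, mul_comm h]

/-- Lemma 6.4. For every fixed `h > 0`, `Δφ(h, R) → 0` as `R → ∞`. -/
theorem deltaPhi_tendsto_zero (h : ℝ) (hh : 0 < h) :
    Tendsto (fun R => deltaPhi h R) atTop (𝓝 0) := by
  have tendsto_div := (tendsto_integral_rescaledIntegrand_inv h).div_const h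
  rw [zero_div] at tendsto_div
  refine tendsto_div.congr' ?_
  filter_upwards [eventually_gt_atTop 0] with R hR
  exact (deltaPhi_eq_integral_rescaledIntegrand_div h hR).symm
end

section
/- For every fixed h > 0, the function R ↦ Δφ(h, R) is strictly decreasing on [0, ∞): for all 0 ≤ R₁ < R₂ one has Δφ(h, R₁) > Δφ(h, R₂). -/
open Filter Topology intervalIntegral

/-! On the circle `z = i + R e^{iu}` one has `|z|² = R² + 1 + 2R sin u` and `Im z = 1 + R sin u`, so
`Δφ(h, R)` is `2π` times the average over this circle of
`Im z √(|z|² + h²) / (h |z|²) = Re (i / z) + h⁻¹ Im z / (√(|z|² + h²) + h)`.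
By the mean value property the average of `Re (i / z)` is `1`, `1/2` or `0` according to whether the
origin lies outside, on or inside the circle, so it is antitone in `R`. With
`q = √(|z|² + h²)`, the `R`-derivative of the bounded function `Im z / (q + h)` is
`h sin u / (q (q + h)) - R cos² u / (q (q + h)²)`.
Added up at `u` and `-u`, these derivatives are nonpositive, because `q` increases with `sin u`.
-/

open Complex Metric Set
open Real (circleAverage)

section CircleAverage

variable {E : Type*} [NormedAddCommGroup E] [NormedSpace ℝ E] {c : ℂ} {R : ℝ}

lemma two_pi_smul_circleAverage (f : ℂ → E) (c : ℂ) (R : ℝ) :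
    (2 * Real.pi) • circleAverage f c R = ∫ u in (-Real.pi)..Real.pi, f (circleMap c R u) := by
  have hshift := ((periodic_circleMap c R).comp f).intervalIntegral_add_eq 0 (-Real.pi)
  rw [show -Real.pi + 2 * Real.pi = Real.pi by ring, zero_add] at hshift
  rw [Real.circleAverage_def, smul_inv_smul₀ Real.two_pi_pos.ne']
  exact hshift

lemma four_pi_smul_circleAverage_eq_integral_add_neg {f : ℂ → E} (hf : CircleIntegrable f c R) :
    (4 * Real.pi) • circleAverage f c R =
      ∫ u in (-Real.pi)..Real.pi, (f (circleMap c R u) + f (circleMap c R (-u))) := by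
  have hintegrable (a b : ℝ) :
      IntervalIntegrable (fun u => f (circleMap c R u)) MeasureTheory.volume a b :=
    ((periodic_circleMap c R).comp f).intervalIntegrable₀ Real.two_pi_pos.ne' hf a b
  have hintegrable_neg : IntervalIntegrable (fun u => f (circleMap c R (-u))) MeasureTheory.volume
      (-Real.pi) Real.pi := by
    simpa only [neg_neg] using
      (IntervalIntegrable.iff_comp_neg).1 (hintegrable Real.pi (-Real.pi))
  rw [integral_add (hintegrable _ _) hintegrable_neg,
    integral_comp_neg fun u => f (circleMap c R u), neg_neg, ← two_pi_smul_circleAverage,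
    ← add_smul]
  ring_nf

lemma circleIntegrable_center_div (hR : |R| ≠ ‖c‖) : CircleIntegrable (fun z => c / z) c R := by
  refine (continuousOn_const.div continuousOn_id ?_).circleIntegrable'
  rintro _ hz rfl
  exact hR (by simpa using hz.symm)

lemma circleAverage_center_div_of_abs_lt_norm (hR : |R| < ‖c‖) :
    circleAverage (fun z => c / z) c R = 1 := by
  have hc : c ≠ 0 := norm_pos_iff.1 ((abs_nonneg R).trans_lt hR)
  have hdiff : DifferentiableOn ℂ (fun z => c / z) (closedBall c |R|) := by
    refine (differentiableOn_const c).div differentiableOn_id fun z hz hz0 => hR.not_ge ?_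
    simpa [show z = 0 from hz0] using hz
  rw [(hdiff.diffContOnCl_ball subset_rfl).circleAverage, div_self hc]

lemma circleAverage_center_div_of_norm_lt_abs (hR : ‖c‖ < |R|) :
    circleAverage (fun z => c / z) c R = 0 := by
  have hball : (0 : ℂ) ∈ ball c |R| := by simpa using hR
  have hmean : circleAverage (fun z => 1 - c / z) c R = 1 := by
    refine .trans (Real.circleAverage_congr_sphere fun z hz => ?_)
      ((diffContOnCl_const (c := (1 : ℂ))).circleAverage_smul_div hball)
    have hz0 : z ≠ 0 := by
      rintro rfl
      exact hR.ne (by simpa using hz)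
    simp [sub_div, div_self hz0]
  rw [Real.circleAverage_fun_sub (circleIntegrable_const 1 c R)
    (circleIntegrable_center_div hR.ne'), Real.circleAverage_const] at hmean
  simpa using hmean

lemma re_div_eq_half_of_norm_sub_eq {z : ℂ} (hz : z ≠ 0) (hcz : ‖z - c‖ = ‖c‖) :
    (c / z).re = 1 / 2 := by
  have hsq : normSq (z - c) = normSq c := by rw [normSq_eq_norm_sq, normSq_eq_norm_sq, hcz]
  have hz' : normSq z ≠ 0 := normSq_eq_zero.not.2 hz
  rw [div_re, ← add_div, div_eq_div_iff hz' two_ne_zero]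
  simp only [normSq_apply, sub_re, sub_im] at hsq ⊢
  linear_combination -hsq

lemma re_center_div_eventuallyEq_half (hR : |R| = ‖c‖) :
    (fun z => (c / z).re) =ᶠ[codiscreteWithin (sphere c |R|)] fun _ => 1 / 2 := by
  have hne : {(0 : ℂ)}ᶜ ∈ codiscreteWithin (sphere c |R|) :=
    codiscreteWithin_mono (subset_univ _) (Set.finite_singleton 0).compl_mem_codiscrete
  filter_upwards [hne, self_mem_codiscreteWithin _] with z hz hzc
  exact re_div_eq_half_of_norm_sub_eq hz ((mem_sphere_iff_norm.1 hzc).trans hR)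

lemma circleIntegrable_re_center_div (c : ℂ) (R : ℝ) :
    CircleIntegrable (fun z => (c / z).re) c R := by
  by_cases hR : |R| = ‖c‖
  · exact (circleIntegrable_const _ c R).congr_codiscreteWithin
      (re_center_div_eventuallyEq_half hR).symm
  · exact ⟨(circleIntegrable_center_div hR).1.re, (circleIntegrable_center_div hR).2.re⟩

lemma circleAverage_re_center_div_of_abs_ne_norm (hR : |R| ≠ ‖c‖) :
    circleAverage (fun z => (c / z).re) c R = (circleAverage (fun z => c / z) c R).re :=
  reCLM.circleAverage_comp_comm (circleIntegrable_center_div hR)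

lemma circleAverage_re_center_div_of_abs_eq_norm (hc : c ≠ 0) (hR : |R| = ‖c‖) :
    circleAverage (fun z => (c / z).re) c R = 1 / 2 := by
  have hR0 : R ≠ 0 := abs_pos.1 (hR ▸ norm_pos_iff.2 hc)
  rw [Real.circleAverage_congr_codiscreteWithin (re_center_div_eventuallyEq_half hR) hR0,
    Real.circleAverage_const]

lemma circleAverage_re_center_div (hc : c ≠ 0) (R : ℝ) :
    circleAverage (fun z => (c / z).re) c R =
      if |R| < ‖c‖ then 1 else if |R| = ‖c‖ then 1 / 2 else 0 := by
  rcases lt_trichotomy |R| ‖c‖ with hR | hR | hR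
  · rw [circleAverage_re_center_div_of_abs_ne_norm hR.ne,
      circleAverage_center_div_of_abs_lt_norm hR, if_pos hR, one_re]
  · rw [circleAverage_re_center_div_of_abs_eq_norm hc hR, if_neg hR.not_lt, if_pos hR]
  · rw [circleAverage_re_center_div_of_abs_ne_norm hR.ne',
      circleAverage_center_div_of_norm_lt_abs hR, if_neg hR.not_gt, if_neg hR.ne', zero_re]

lemma antitoneOn_circleAverage_re_center_div (c : ℂ) :
    AntitoneOn (circleAverage (fun z => (c / z).re) c) (Ici 0) := by
  rcases eq_or_ne c 0 with rfl | hc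
  · simp [AntitoneOn, Real.circleAverage_const]
  intro R₁ (h₁ : 0 ≤ R₁) R₂ (h₂ : 0 ≤ R₂) h₁₂
  rw [circleAverage_re_center_div hc, circleAverage_re_center_div hc, abs_of_nonneg h₁,
    abs_of_nonneg h₂]
  split_ifs <;> grind

end CircleAverage

/-- The speed of the helix `t ↦ (z e^{it}, h t)` of pitch `h` through the point `z` of the plane
orthogonal to its axis. -/
noncomputable def helixSpeed (h : ℝ) (z : ℂ) : ℝ := √(‖z‖ ^ 2 + h ^ 2)

/-- The bounded part of the integrand of `deltaPhi`, multiplied by `h`: what is left of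
`Im z √(|z|² + h²) / |z|²` after subtracting its singular part `h Re (i / z)`. -/
noncomputable def turningExcess (h : ℝ) (z : ℂ) : ℝ := z.im / (helixSpeed h z + h)

section Pointwise

variable {h : ℝ} (R u : ℝ)

lemma helixSpeed_sq (h : ℝ) (z : ℂ) : helixSpeed h z ^ 2 = ‖z‖ ^ 2 + h ^ 2 :=
  Real.sq_sqrt (by positivity)

lemma helixSpeed_pos (hh : h ≠ 0) (z : ℂ) : 0 < helixSpeed h z :=
  Real.sqrt_pos.2 (by positivity)

lemma continuous_turningExcess (hh : 0 < h) : Continuous (turningExcess h) := by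
  refine continuous_im.div (by unfold helixSpeed; fun_prop) fun z => ?_
  exact (add_pos (helixSpeed_pos hh.ne' z) hh).ne'

lemma I_div_re (z : ℂ) : (I / z).re = z.im / ‖z‖ ^ 2 := by
  simp [div_re, normSq_eq_norm_sq]

-- At `z = 0` both sides vanish, since division by zero gives zero.
lemma helixSpeed_mul_im_div_eq (hh : 0 < h) (z : ℂ) :
    helixSpeed h z * z.im / (h * ‖z‖ ^ 2) = (I / z).re + h⁻¹ * turningExcess h z := by
  rcases eq_or_ne z 0 with rfl | hz
  · simp [turningExcess]
  have hz' : ‖z‖ ≠ 0 := norm_ne_zero_iff.2 hz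
  have hq : helixSpeed h z + h ≠ 0 := (add_pos (helixSpeed_pos hh.ne' z) hh).ne'
  rw [I_div_re, turningExcess]
  field_simp
  linear_combination z.im * helixSpeed_sq h z

lemma im_circleMap_I : (circleMap I R u).im = 1 + R * Real.sin u := by
  simp [circleMap, exp_ofReal_mul_I_im]

lemma norm_circleMap_I_sq : ‖circleMap I R u‖ ^ 2 = R ^ 2 + 1 + 2 * R * Real.sin u := by
  have hre : (circleMap I R u).re = R * Real.cos u := by
    simp [circleMap, exp_ofReal_mul_I_re]
  rw [← normSq_eq_norm_sq, normSq_apply, hre, im_circleMap_I]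
  linear_combination R ^ 2 * Real.sin_sq_add_cos_sq u

lemma helixSpeed_circleMap_I (h : ℝ) :
    helixSpeed h (circleMap I R u) = √(R ^ 2 + 1 + 2 * R * Real.sin u + h ^ 2) := by
  rw [helixSpeed, norm_circleMap_I_sq]

lemma deltaPhi_eq_two_pi_mul_circleAverage (hh : 0 < h) :
    deltaPhi h R = 2 * Real.pi *
      (circleAverage (fun z => (I / z).re) I R + h⁻¹ * circleAverage (turningExcess h) I R) := by
  have hexcess : CircleIntegrable (fun z => h⁻¹ • turningExcess h z) I R :=
    ((continuous_turningExcess hh).const_smul h⁻¹).continuousOn.circleIntegrable'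
  calc deltaPhi h R
      = 2 * Real.pi * circleAverage (fun z => helixSpeed h z * z.im / (h * ‖z‖ ^ 2)) I R := by
        rw [← smul_eq_mul, two_pi_smul_circleAverage]
        simp only [helixSpeed_circleMap_I, im_circleMap_I, norm_circleMap_I_sq, deltaPhi]
    _ = 2 * Real.pi * circleAverage (fun z => (I / z).re + h⁻¹ • turningExcess h z) I R := by
        simp only [helixSpeed_mul_im_div_eq hh, smul_eq_mul]
    _ = _ := by
        rw [Real.circleAverage_fun_add (circleIntegrable_re_center_div I R) hexcess,
          Real.circleAverage_fun_smul, smul_eq_mul]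

end Pointwise

section Excess

variable {h : ℝ}

lemma hasDerivAt_helixSpeed_circleMap_I (hh : h ≠ 0) (u R : ℝ) :
    HasDerivAt (fun R => helixSpeed h (circleMap I R u))
      ((R + Real.sin u) / helixSpeed h (circleMap I R u)) R := by
  have hpos : 0 < R ^ 2 + 1 + 2 * R * Real.sin u + h ^ 2 := by
    rw [← norm_circleMap_I_sq]; positivity
  have hpoly : HasDerivAt (fun R : ℝ => R ^ 2 + 1 + 2 * R * Real.sin u + h ^ 2)
      (2 * (R + Real.sin u)) R := by
    refine (((((hasDerivAt_id R).pow 2).add_const 1).add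
      (((hasDerivAt_id R).const_mul 2).mul_const (Real.sin u))).add_const (h ^ 2)).congr_deriv ?_
    simp [mul_add]
  simp only [helixSpeed_circleMap_I]
  exact (hpoly.sqrt hpos.ne').congr_deriv (mul_div_mul_left _ _ two_ne_zero)

lemma hasDerivAt_turningExcess_circleMap_I (hh : 0 < h) (u R : ℝ) {q : ℝ}
    (hq : helixSpeed h (circleMap I R u) = q) :
    HasDerivAt (fun R => turningExcess h (circleMap I R u))
      (h * Real.sin u / (q * (q + h)) - R * Real.cos u ^ 2 / (q * (q + h) ^ 2)) R := by
  have hq0 : 0 < q := hq ▸ helixSpeed_pos hh.ne' _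
  have hq2 : q ^ 2 = R ^ 2 + 1 + 2 * R * Real.sin u + h ^ 2 := by
    rw [← hq, helixSpeed_sq, norm_circleMap_I_sq]
  have him : HasDerivAt (fun R => (circleMap I R u).im) (Real.sin u) R := by
    simpa only [im_circleMap_I, id, one_mul] using
      ((hasDerivAt_id R).mul_const (Real.sin u)).const_add 1
  have hdiv := him.div ((hasDerivAt_helixSpeed_circleMap_I hh.ne' u R).add_const h)
    (by rw [hq]; positivity)
  refine hdiv.congr_deriv ?_
  rw [hq, im_circleMap_I, Real.cos_sq']
  field_simp
  linear_combination Real.sin u * hq2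

lemma helixSpeed_circleMap_I_neg_le {u R : ℝ} (hR : 0 ≤ R) (hu : 0 ≤ Real.sin u) :
    helixSpeed h (circleMap I R (-u)) ≤ helixSpeed h (circleMap I R u) := by
  have hRu : 0 ≤ R * Real.sin u := mul_nonneg hR hu
  rw [helixSpeed_circleMap_I, helixSpeed_circleMap_I, Real.sin_neg]
  exact Real.sqrt_le_sqrt (by linarith)

lemma antitoneOn_turningExcess_add_neg (hh : 0 < h) (u : ℝ) :
    AntitoneOn (fun R => turningExcess h (circleMap I R u) + turningExcess h (circleMap I R (-u)))
      (Ici 0) := by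
  wlog hu : 0 ≤ Real.sin u generalizing u
  · simpa only [neg_neg, add_comm] using this (-u) (by rw [Real.sin_neg]; linarith)
  have hderiv R := (hasDerivAt_turningExcess_circleMap_I hh u R rfl).add
    (hasDerivAt_turningExcess_circleMap_I hh (-u) R rfl)
  refine antitoneOn_of_hasDerivWithinAt_nonpos (convex_Ici 0)
    (fun R _ => (hderiv R).continuousAt.continuousWithinAt)
    (fun R _ => (hderiv R).hasDerivWithinAt) fun R hR => ?_
  rw [interior_Ici] at hR
  have hR0 : 0 ≤ R := le_of_lt hR
  have hp := helixSpeed_pos hh.ne' (circleMap I R (-u))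
  have hq := helixSpeed_pos hh.ne' (circleMap I R u)
  have hpq := helixSpeed_circleMap_I_neg_le (h := h) hR0 hu
  rw [Real.sin_neg, Real.cos_neg, mul_neg, neg_div]
  generalize helixSpeed h (circleMap I R (-u)) = p at *
  generalize helixSpeed h (circleMap I R u) = q at *
  have hodd : h * Real.sin u / (q * (q + h)) ≤ h * Real.sin u / (p * (p + h)) := by gcongr
  have heven_q : 0 ≤ R * Real.cos u ^ 2 / (q * (q + h) ^ 2) := by positivity
  have heven_p : 0 ≤ R * Real.cos u ^ 2 / (p * (p + h) ^ 2) := by positivity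
  linarith

lemma strictAntiOn_turningExcess_circleMap_I_zero (hh : 0 < h) :
    StrictAntiOn (fun R => turningExcess h (circleMap I R 0)) (Ici 0) := by
  intro R₁ (h₁ : 0 ≤ R₁) R₂ _ h₁₂
  have hspeed : √(R₁ ^ 2 + 1 + h ^ 2) < √(R₂ ^ 2 + 1 + h ^ 2) :=
    Real.sqrt_lt_sqrt (by positivity) (by gcongr)
  simp only [turningExcess, im_circleMap_I, helixSpeed_circleMap_I, Real.sin_zero, mul_zero,
    add_zero]
  gcongr

lemma strictAntiOn_circleAverage_turningExcess (hh : 0 < h) :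
    StrictAntiOn (circleAverage (turningExcess h) I) (Ici 0) := by
  intro R₁ h₁ R₂ h₂ h₁₂
  have hexcess := continuous_turningExcess hh
  have hcont : ∀ R, Continuous fun u =>
      turningExcess h (circleMap I R u) + turningExcess h (circleMap I R (-u)) := fun R => by
    fun_prop
  have hzero := strictAntiOn_turningExcess_circleMap_I_zero hh h₁ h₂ h₁₂
  rw [← smul_lt_smul_iff_of_pos_left (by positivity : 0 < 4 * Real.pi),
    four_pi_smul_circleAverage_eq_integral_add_neg hexcess.continuousOn.circleIntegrable',
    four_pi_smul_circleAverage_eq_integral_add_neg hexcess.continuousOn.circleIntegrable']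
  refine integral_lt_integral_of_continuousOn_of_le_of_exists_lt
    (by linarith [Real.pi_pos]) (hcont R₂).continuousOn (hcont R₁).continuousOn
    (fun u _ => antitoneOn_turningExcess_add_neg hh u h₁ h₂ h₁₂.le)
    ⟨0, ⟨by linarith [Real.pi_pos], Real.pi_pos.le⟩, ?_⟩
  simpa only [neg_zero] using add_lt_add hzero hzero

end Excess

/-- Lemma 6.5. For every fixed `h > 0`, the function `R ↦ Δφ(h, R)`
is strictly decreasing on `[0, ∞)`. -/
theorem deltaPhi_strictAnti (h : ℝ) (hh : 0 < h) :
    StrictAntiOn (fun R => deltaPhi h R) (Set.Ici 0) := by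
  intro R₁ h₁ R₂ h₂ h₁₂
  have hwinding := antitoneOn_circleAverage_re_center_div I h₁ h₂ h₁₂.le
  have hexcess := strictAntiOn_circleAverage_turningExcess hh h₁ h₂ h₁₂
  simp only [deltaPhi_eq_two_pi_mul_circleAverage _ hh]
  refine mul_lt_mul_of_pos_left (add_lt_add_of_le_of_lt hwinding ?_) Real.two_pi_pos
  exact mul_lt_mul_of_pos_left hexcess (inv_pos.2 hh)
end
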